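/- There is an absolute constant c > 0 such that the following holds for all sufficiently large n. Let 0 < p < 1 and suppose that G is an n-vertex (ε,s)-expander with 2^{-100} < ε < 1 and s ≥ 20·p^{-3}·(log n)^{13}. Let U ⊆ V(G) satisfy |N_G(U)| ≥ |U|·p^{-4}·(log n)^{24}, and let F ⊆ E(G) satisfy |F| ≤ |U|. Let V be a p-random subset of V(G). Then, with probability at least 1 − e^{−c·|U|·(log n)^2}, we have |B^{(log n)^4}_{G−F}(U, V)| > |V|/2. -/

import Mathlib

/-- The external neighbourhood of a vertex set `U` in a graph `G`. -/
def extNbhd {α : Type*} (G : SimpleGraph α) (U : Set α) : Set α :=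
  {v | v ∉ U ∧ ∃ u ∈ U, G.Adj u v}

/-- `G`, regarded as an `n`-vertex graph, is an `(ε, s)`-expander. -/
def IsExpander {α : Type*} (n : ℕ) (G : SimpleGraph α) (ε s : ℝ) : Prop :=
  ∀ (U : Set α) (F : Set (Sym2 α)), F ⊆ G.edgeSet →
    1 ≤ U.ncard → (U.ncard : ℝ) ≤ 2 / 3 * n → (F.ncard : ℝ) ≤ s * U.ncard →
    ε * U.ncard / Real.logb 2 n ^ 2 ≤ ((extNbhd (G.deleteEdges F) U).ncard : ℝ)

/-- `ball G ℓ U V` is the set of vertices of `V` reachable by a path of length at most `ℓ`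
which starts at a vertex of `U` and has all its internal vertices in `V`. -/
def ball {α : Type*} (G : SimpleGraph α) (ℓ : ℝ) (U V : Set α) : Set α :=
  {v | v ∈ V ∧ ∃ u ∈ U, ∃ w : G.Walk u v, w.IsPath ∧ ((w.length : ℝ) ≤ ℓ) ∧
    ∀ z ∈ w.support, z ≠ u → z ≠ v → z ∈ V}

/-- The probability, under the distribution of a `p`-random subset of `Fin n`, of `E`. -/
noncomputable def bernoulliProb (n : ℕ) (p : ℝ) (E : Set (Finset (Fin n))) : ℝ :=
  ∑ S : Finset (Fin n),
    E.indicator (fun A => p ^ A.card * (1 - p) ^ (n - A.card)) S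


set_option linter.unusedSectionVars false

section prob
variable {α : Type*} [DecidableEq α]

noncomputable def EE (p : ℝ) (T : Finset α) (f : Finset α → ℝ) : ℝ :=
  ∑ S ∈ T.powerset, p ^ S.card * (1 - p) ^ (T.card - S.card) * f S

theorem EE_empty (p : ℝ) (f : Finset α → ℝ) : EE p ∅ f = f ∅ := by
  simp [EE]

theorem EE_insert (p : ℝ) (T : Finset α) (a : α) (ha : a ∉ T) (f : Finset α → ℝ) :
    EE p (insert a T) f = (1 - p) * EE p T f + p * EE p T (fun S => f (insert a S)) := by
  unfold EE
  rw [Finset.sum_powerset_insert ha, Finset.mul_sum, Finset.mul_sum]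
  congr 1
  · refine Finset.sum_congr rfl fun S hS => ?_
    have hS' := Finset.card_le_card (Finset.mem_powerset.1 hS)
    rw [Finset.card_insert_of_notMem ha, Nat.sub_add_comm hS', pow_succ]
    ring
  · refine Finset.sum_congr rfl fun S hS => ?_
    have h2 : a ∉ S := fun h => ha (Finset.mem_powerset.1 hS h)
    rw [Finset.card_insert_of_notMem ha, Finset.card_insert_of_notMem h2, Nat.add_sub_add_right,
      pow_succ]
    ring

theorem EE_add (p : ℝ) (T : Finset α) (f g : Finset α → ℝ) :
    EE p T (fun S => f S + g S) = EE p T f + EE p T g := by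
  simp [EE, mul_add, Finset.sum_add_distrib]

theorem EE_mul (p : ℝ) (T : Finset α) (c : ℝ) (f : Finset α → ℝ) :
    EE p T (fun S => c * f S) = c * EE p T f := by
  unfold EE
  rw [Finset.mul_sum]
  exact Finset.sum_congr rfl fun S _ => by ring

theorem EE_sum {β : Type*} (p : ℝ) (T : Finset α) (I : Finset β) (f : β → Finset α → ℝ) :
    EE p T (fun S => ∑ i ∈ I, f i S) = ∑ i ∈ I, EE p T (f i) := by
  unfold EE
  simp only [Finset.mul_sum]
  exact Finset.sum_comm

theorem EE_const (p : ℝ) (T : Finset α) (c : ℝ) : EE p T (fun _ => c) = c := by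
  induction T using Finset.induction_on with
  | empty => simp [EE_empty]
  | insert a T ha ih => rw [EE_insert _ _ _ ha, ih]; ring

theorem EE_mono {p : ℝ} (h0 : 0 ≤ p) (h1 : p ≤ 1) (T : Finset α) {f g : Finset α → ℝ}
    (h : ∀ S, f S ≤ g S) : EE p T f ≤ EE p T g := by
  unfold EE
  refine Finset.sum_le_sum fun S _ => mul_le_mul_of_nonneg_left (h S) ?_
  have : 0 ≤ 1 - p := by linarith
  positivity

theorem EE_union (q r : ℝ) (T : Finset α) (f : Finset α → ℝ) :
    EE (1 - (1 - q) * (1 - r)) T f = EE q T (fun A => EE r T (fun C => f (A ∪ C))) := by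
  induction T using Finset.induction_on generalizing f with
  | empty => simp [EE_empty]
  | insert a T ha ih =>
    simp only [EE_insert _ _ _ ha, Finset.insert_union, Finset.union_insert, Finset.insert_idem,
      EE_add, EE_mul]
    rw [ih, ih (fun S => f (insert a S))]
    ring

theorem EE_disj (q : ℝ) (T K : Finset α) :
    EE q T (fun S => if Disjoint S K then 1 else 0) = (1 - q) ^ (T ∩ K).card := by
  induction T using Finset.induction_on with
  | empty => simp [EE_empty]
  | insert a T ha ih =>
    rw [EE_insert _ _ _ ha]
    by_cases hK : a ∈ K
    · simp only [Finset.disjoint_insert_left, hK, not_true, false_and, if_false, EE_const]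
      rw [ih, Finset.insert_inter_of_mem hK, Finset.card_insert_of_notMem (by simp [ha])]
      ring
    · simp only [Finset.disjoint_insert_left, hK, not_false_eq_true, true_and]
      rw [ih, Finset.insert_inter_of_notMem hK]
      ring

theorem one_step {q x y l D : ℝ} (h0 : 0 ≤ q) (h1 : q ≤ 1) (hl : 0 ≤ l) (hD : |y - x| ≤ D)
    (hlD : l * D ≤ 1) :
    (1 - q) * Real.exp (-l * x) + q * Real.exp (-l * y) ≤
      Real.exp (l ^ 2 * D ^ 2) * Real.exp (-l * ((1 - q) * x + q * y)) := by
  have hD0 : 0 ≤ D := (abs_nonneg _).trans hD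
  set m := (1 - q) * x + q * y with hm
  set z := l * (y - x) with hz
  have hz1 : |z| ≤ l * D := by
    rw [hz, abs_mul, abs_of_nonneg hl]; exact mul_le_mul_of_nonneg_left hD hl
  have hzz : z ^ 2 ≤ l ^ 2 * D ^ 2 := by
    rw [← mul_pow, ← sq_abs z]; exact pow_le_pow_left₀ (abs_nonneg _) hz1 2
  have e1 : Real.exp (-l * x) = Real.exp (-l * m) * Real.exp (q * z) := by
    rw [← Real.exp_add]; congr 1; rw [hm, hz]; ring
  have e2 : Real.exp (-l * y) = Real.exp (-l * m) * Real.exp (-((1 - q) * z)) := by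
    rw [← Real.exp_add]; congr 1; rw [hm, hz]; ring
  have key : ∀ u : ℝ, |u| ≤ 1 → Real.exp u ≤ 1 + u + u ^ 2 := by
    intro u hu
    have := (abs_le.1 (Real.abs_exp_sub_one_sub_id_le hu)).2
    linarith
  have k1 := key (q * z) (by
    rw [abs_mul, abs_of_nonneg h0]; nlinarith [abs_nonneg z])
  have k2 := key (-((1 - q) * z)) (by
    rw [abs_neg, abs_mul, abs_of_nonneg (by linarith)]; nlinarith [abs_nonneg z])
  have k3 : (1 - q) * Real.exp (q * z) + q * Real.exp (-((1 - q) * z)) ≤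
      Real.exp (l ^ 2 * D ^ 2) := by
    have := Real.add_one_le_exp (l ^ 2 * D ^ 2)
    have a1 := mul_le_mul_of_nonneg_left k1 (show 0 ≤ 1 - q by linarith)
    have a2 := mul_le_mul_of_nonneg_left k2 h0
    have a3 : (1 - q) * (1 + q * z + (q * z) ^ 2) + q * (1 + -((1 - q) * z) + (-((1 - q) * z)) ^ 2)
      = 1 + (q * (1 - q)) * z ^ 2 := by ring
    have a4 : q * (1 - q) ≤ 1 := by nlinarith
    nlinarith [sq_nonneg z]
  rw [e1, e2]
  nlinarith [Real.exp_pos (-l * m)]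

theorem mcdiarmid {q l : ℝ} (h0 : 0 ≤ q) (h1 : q ≤ 1) (hl : 0 ≤ l) (D : α → ℝ) (T : Finset α)
    (hlD : ∀ a, l * D a ≤ 1) (f : Finset α → ℝ) (hf : ∀ a S, |f (insert a S) - f S| ≤ D a) :
    EE q T (fun S => Real.exp (-l * f S)) ≤
      Real.exp (l ^ 2 * ∑ a ∈ T, D a ^ 2) * Real.exp (-l * EE q T f) := by
  induction T using Finset.induction_on generalizing f with
  | empty => simp [EE_empty]
  | insert a T ha ih =>
    have hg := ih (fun S => (1 - q) * f S + q * f (insert a S)) (by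
      intro b S
      have e : (1 - q) * f (insert b S) + q * f (insert a (insert b S)) -
        ((1 - q) * f S + q * f (insert a S)) = (1 - q) * (f (insert b S) - f S) +
          q * (f (insert b (insert a S)) - f (insert a S)) := by
        rw [Finset.insert_comm]; ring
      have b1 := hf b S
      have b2 := hf b (insert a S)
      rw [abs_le] at b1 b2
      rw [e, abs_le]
      constructor <;> nlinarith)
    rw [EE_add, EE_mul, EE_mul] at hg
    rw [EE_insert _ _ _ ha, EE_insert _ _ _ ha, Finset.sum_insert ha, mul_add, Real.exp_add,
      ← EE_mul, ← EE_mul, ← EE_add, mul_assoc]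
    refine le_trans ?_ (mul_le_mul_of_nonneg_left hg (Real.exp_pos _).le)
    rw [← EE_mul]
    exact EE_mono h0 h1 _ fun S => one_step h0 h1 hl (hf a S) (hlD a)

open Classical in
theorem tail {q l : ℝ} (h0 : 0 ≤ q) (h1 : q ≤ 1) (hl : 0 ≤ l) (D : α → ℝ) (T : Finset α)
    (hlD : ∀ a, l * D a ≤ 1) (f : Finset α → ℝ) (hf : ∀ a S, |f (insert a S) - f S| ≤ D a)
    {Q m t : ℝ} (hQ : ∑ a ∈ T, D a ^ 2 ≤ Q) (hm : m ≤ EE q T f) :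
    EE q T (fun S => if f S ≤ m - t then 1 else 0) ≤ Real.exp (-l * t + l ^ 2 * Q) := by
  have h := mcdiarmid h0 h1 hl D T hlD f hf
  have : EE q T (fun S => if f S ≤ m - t then 1 else 0) ≤
      EE q T (fun S => Real.exp (l * (m - t)) * Real.exp (-l * f S)) := by
    refine EE_mono h0 h1 _ fun S => ?_
    split_ifs with hS
    · rw [← Real.exp_add]
      apply Real.one_le_exp
      nlinarith
    · positivity
  refine this.trans ?_
  rw [EE_mul]
  refine (mul_le_mul_of_nonneg_left h (Real.exp_pos _).le).trans ?_
  rw [← Real.exp_add, ← Real.exp_add]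
  apply Real.exp_le_exp.2
  nlinarith [mul_le_mul_of_nonneg_left hQ (sq_nonneg l)]

end prob

theorem exists_H {n : ℕ} {G : SimpleGraph (Fin n)} {ε s : ℝ} (hG : IsExpander n G ε s)
    (B : Finset (Fin n)) (F : Set (Sym2 (Fin n))) (hF : F ⊆ G.edgeSet) (hFB : F.ncard ≤ B.card)
    (hB0 : 1 ≤ B.card) (hB : (B.card : ℝ) ≤ 2 / 3 * n) (d : ℕ) (hd : 1 ≤ d)
    (he0 : 0 < ε) (he1 : ε < 1) (hL : 1 ≤ Real.logb 2 n) (hs : (d : ℝ) + 2 ≤ s) :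
    ∃ H : Finset (Fin n × Fin n),
      (∀ e ∈ H, e.1 ∈ B ∧ e.2 ∉ B ∧ (G.deleteEdges F).Adj e.1 e.2) ∧
      (∀ b, (H.filter (fun e => e.1 = b)).card ≤ d) ∧
      (∀ x, (H.filter (fun e => e.2 = x)).card ≤ d) ∧
      d * (ε * B.card / (4 * Real.logb 2 n ^ 2)) ≤ (H.card : ℝ) := by
  classical
  set L := Real.logb 2 n with hLdef
  let P : Finset (Fin n × Fin n) → Prop := fun H =>
      (∀ e ∈ H, e.1 ∈ B ∧ e.2 ∉ B ∧ (G.deleteEdges F).Adj e.1 e.2) ∧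
      (∀ b, (H.filter (fun e => e.1 = b)).card ≤ d) ∧
      (∀ x, (H.filter (fun e => e.2 = x)).card ≤ d)
  obtain ⟨H, hH, hmax⟩ := Finset.exists_max_image (Finset.univ.filter P) Finset.card
    ⟨∅, by simp [P]⟩
  simp only [Finset.mem_filter, Finset.mem_univ, true_and] at hH hmax
  refine ⟨H, hH.1, hH.2.1, hH.2.2, ?_⟩
  by_contra hlt
  push Not at hlt
  set t := ε * B.card / (4 * L ^ 2) with ht
  set B' := B.filter (fun b => d ≤ (H.filter (fun e => e.1 = b)).card) with hB'
  set X' := Finset.univ.filter (fun x => d ≤ (H.filter (fun e => e.2 = x)).card) with hX'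
  have hdpos : (0 : ℝ) < d := by exact_mod_cast hd
  have c1 : d * B'.card ≤ H.card := by
    calc d * B'.card = B'.card • d := by rw [smul_eq_mul, mul_comm]
      _ ≤ ∑ b ∈ B', (H.filter (fun e => e.1 = b)).card :=
        Finset.card_nsmul_le_sum _ _ _ fun b hb => (Finset.mem_filter.1 hb).2
      _ ≤ ∑ b, (H.filter (fun e => e.1 = b)).card :=
        Finset.sum_le_sum_of_subset (Finset.subset_univ _)
      _ = H.card := (Finset.card_eq_sum_card_fiberwise (fun _ _ => by simp)).symm
  have c2 : d * X'.card ≤ H.card := by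
    calc d * X'.card = X'.card • d := by rw [smul_eq_mul, mul_comm]
      _ ≤ ∑ b ∈ X', (H.filter (fun e => e.2 = b)).card :=
        Finset.card_nsmul_le_sum _ _ _ fun b hb => (Finset.mem_filter.1 hb).2
      _ ≤ ∑ b, (H.filter (fun e => e.2 = b)).card :=
        Finset.sum_le_sum_of_subset (Finset.subset_univ _)
      _ = H.card := (Finset.card_eq_sum_card_fiberwise (fun _ _ => by simp)).symm
  have c1' : (B'.card : ℝ) < t := by
    have : (d : ℝ) * B'.card ≤ H.card := by exact_mod_cast c1
    exact lt_of_mul_lt_mul_left (this.trans_lt hlt) hdpos.le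
  have c2' : (X'.card : ℝ) < t := by
    have : (d : ℝ) * X'.card ≤ H.card := by exact_mod_cast c2
    exact lt_of_mul_lt_mul_left (this.trans_lt hlt) hdpos.le
  set W := B \ B' with hW
  have hWc : (W.card : ℝ) = B.card - B'.card := by
    have : W.card + B'.card = B.card :=
      Finset.card_sdiff_add_card_eq_card (Finset.filter_subset _ _)
    rw [← this]; push_cast; ring
  have hbpos : (1 : ℝ) ≤ B.card := by exact_mod_cast hB0
  have hL2 : 1 ≤ L ^ 2 := one_le_pow₀ hL
  have htb : t ≤ B.card / 4 := by
    rw [ht, div_le_div_iff₀ (by positivity) (by norm_num)]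
    nlinarith
  let F' : Set (Sym2 (Fin n)) := F ∪ ↑(H.image (fun e => s(e.1, e.2)))
  have hF'c : (F'.ncard : ℝ) ≤ B.card + H.card := by
    have h1 : F'.ncard ≤ F.ncard + _ := Set.ncard_union_le _ _
    rw [Set.ncard_coe_finset] at h1
    have h2 : (H.image (fun e => s(e.1, e.2))).card ≤ H.card := Finset.card_image_le
    exact_mod_cast (by omega : F'.ncard ≤ B.card + H.card)
  have hexp := hG (↑W) F' (by
      intro e he
      rcases he with he | he
      · exact hF he
      · simp only [Finset.coe_image, Set.mem_image, Finset.mem_coe] at he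
        obtain ⟨x, hx, rfl⟩ := he
        have := (hH.1 x hx).2.2
        rw [SimpleGraph.deleteEdges_adj] at this
        exact this.1)
    (by
      rw [Set.ncard_coe_finset]
      have : (0 : ℝ) < W.card := by rw [hWc]; linarith
      exact_mod_cast this)
    (by
      rw [Set.ncard_coe_finset, hWc]
      have : (0 : ℝ) ≤ B'.card := by positivity
      linarith)
    (by
      rw [Set.ncard_coe_finset, hWc]
      have h3 : (d : ℝ) * t ≤ d * (B.card / 4) := mul_le_mul_of_nonneg_left htb hdpos.le
      have h4 : (3 / 4 * B.card : ℝ) ≤ B.card - B'.card := by linarith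
      have h5 : ((d : ℝ) + 2) * (3 / 4 * B.card) ≤ s * (B.card - B'.card) := by
        apply mul_le_mul hs h4 (by positivity) (by linarith)
      nlinarith)
  have hsub : extNbhd (G.deleteEdges F') (↑W) ⊆ (↑(B' ∪ X') : Set (Fin n)) := by
    rintro v ⟨hv, u, hu, huv⟩
    rw [SimpleGraph.deleteEdges_adj] at huv
    obtain ⟨huv, hnot⟩ := huv
    simp only [Finset.coe_union, Set.mem_union, Finset.mem_coe] at *
    by_contra hcon
    push Not at hcon
    have hvB : v ∉ B := fun h => hv (Finset.mem_sdiff.2 ⟨h, hcon.1⟩)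
    have huB : u ∈ B := (Finset.mem_sdiff.1 hu).1
    have huB' : (H.filter (fun e => e.1 = u)).card < d := by
      by_contra h
      exact (Finset.mem_sdiff.1 hu).2 (Finset.mem_filter.2 ⟨huB, not_lt.1 h⟩)
    have hvX' : (H.filter (fun e => e.2 = v)).card < d := by
      by_contra h
      exact hcon.2 (Finset.mem_filter.2 ⟨Finset.mem_univ _, not_lt.1 h⟩)
    have huvH : (u, v) ∉ H := by
      intro h
      apply hnot
      right
      simp only [Finset.coe_image, Set.mem_image, Finset.mem_coe]
      exact ⟨(u, v), h, rfl⟩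
    have := hmax (insert (u, v) H) ⟨by
        intro e he
        rcases Finset.mem_insert.1 he with rfl | he
        · refine ⟨huB, hvB, ?_⟩
          rw [SimpleGraph.deleteEdges_adj]
          exact ⟨huv, fun h => hnot (Or.inl h)⟩
        · exact hH.1 e he, by
        intro b
        rw [Finset.filter_insert]
        split_ifs with hb
        · simp only at hb
          subst hb
          exact (Finset.card_insert_le _ _).trans huB'
        · exact hH.2.1 b, by
        intro b
        rw [Finset.filter_insert]
        split_ifs with hb
        · simp only at hb
          subst hb
          exact (Finset.card_insert_le _ _).trans hvX'
        · exact hH.2.2 b⟩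
    rw [Finset.card_insert_of_notMem huvH] at this
    omega
  have hle := Set.ncard_le_ncard hsub (Finset.finite_toSet _)
  rw [Set.ncard_coe_finset] at hle
  have hle2 : ((extNbhd (G.deleteEdges F') (↑W)).ncard : ℝ) ≤ B'.card + X'.card := by
    exact_mod_cast hle.trans (Finset.card_union_le _ _)
  rw [Set.ncard_coe_finset, hWc] at hexp
  have : ε * (B.card - B'.card) / L ^ 2 < 2 * t := by linarith
  have e4 : 2 * t = ε * (B.card / 2) / L ^ 2 := by rw [ht]; field_simp; norm_num
  rw [e4, div_lt_div_iff_of_pos_right (by positivity)] at this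
  have := lt_of_mul_lt_mul_left this he0.le
  linarith
theorem card_inter_eq {n : ℕ} (S B : Finset (Fin n)) :
    ((S ∩ B).card : ℝ) = ∑ b ∈ B, (1 - (if Disjoint S {b} then (1 : ℝ) else 0)) := by
  rw [Finset.inter_comm, ← Finset.filter_mem_eq_inter, Finset.card_filter]
  push_cast
  refine Finset.sum_congr rfl fun b _ => ?_
  by_cases hb : b ∈ S <;> simp [hb]

theorem EE_one_sub {n : ℕ} (q : ℝ) (K : Finset (Fin n)) :
    EE q Finset.univ (fun S => 1 - (if Disjoint S K then (1 : ℝ) else 0)) = 1 - (1 - q) ^ K.card := by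
  have h := EE_add q Finset.univ (fun _ => (1 : ℝ))
    (fun S : Finset (Fin n) => (-1) * (if Disjoint S K then (1 : ℝ) else 0))
  rw [EE_mul, EE_const, EE_disj, Finset.univ_inter] at h
  rw [show 1 - (1 - q) ^ K.card = 1 + -1 * (1 - q) ^ K.card by ring, ← h]
  congr 1
  ext S
  ring

theorem EE_card_inter {n : ℕ} (q : ℝ) (B : Finset (Fin n)) :
    EE q Finset.univ (fun S => ((S ∩ B).card : ℝ)) = q * B.card := by
  simp only [card_inter_eq]
  rw [EE_sum]
  simp only [EE_one_sub]
  simp [mul_comm]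

theorem card_inter_lip {n : ℕ} (B : Finset (Fin n)) (a : Fin n) (S : Finset (Fin n)) :
    |(((insert a S) ∩ B).card : ℝ) - ((S ∩ B).card : ℝ)| ≤ 1 := by
  have h1 : (S ∩ B).card ≤ (insert a S ∩ B).card :=
    Finset.card_le_card (Finset.inter_subset_inter_right (Finset.subset_insert _ _))
  have h2 : (insert a S ∩ B).card ≤ (S ∩ B).card + 1 := by
    refine (Finset.card_le_card (t := insert a (S ∩ B)) ?_).trans (Finset.card_insert_le _ _)
    intro x hx
    simp only [Finset.mem_inter, Finset.mem_insert] at *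
    tauto
  have h1' : ((S ∩ B).card : ℝ) ≤ (insert a S ∩ B).card := by exact_mod_cast h1
  have h2' : ((insert a S ∩ B).card : ℝ) ≤ (S ∩ B).card + 1 := by exact_mod_cast h2
  rw [abs_le]; constructor <;> linarith

theorem hit_prob {q : ℝ} (h0 : 0 ≤ q) (h1 : q ≤ 1) {k d : ℕ} (hk : k ≤ d) (hqd : q * d ≤ 2) :
    q * k / 3 ≤ 1 - (1 - q) ^ k := by
  have e1 : 1 + k * q ≤ (1 + q) ^ k := one_add_mul_le_pow (by linarith) k
  have e2 : (1 - q) ^ k * (1 + q) ^ k ≤ 1 := by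
    rw [← mul_pow]
    exact pow_le_one₀ (by nlinarith) (by nlinarith)
  have e3 : 0 ≤ (1 - q) ^ k := pow_nonneg (by linarith) k
  have e4 : (1 - q) ^ k * (1 + k * q) ≤ 1 := (mul_le_mul_of_nonneg_left e1 e3).trans e2
  have hk' : (k : ℝ) ≤ d := by exact_mod_cast hk
  have hk0 : (0 : ℝ) ≤ k := by positivity
  have e5 : q * k ≤ 2 := (mul_le_mul_of_nonneg_left hk' h0).trans hqd
  have e6 : 0 ≤ q * k := by positivity
  set y := q * k
  have e7 : (1 - q) ^ k * (1 + y) ≤ 1 := by rw [show y = k * q from mul_comm _ _]; exact e4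
  by_contra hc
  push Not at hc
  have : (1 - y / 3) * (1 + y) < (1 - q) ^ k * (1 + y) :=
    mul_lt_mul_of_pos_right (by linarith) (by linarith)
  nlinarith

open Classical in
noncomputable def grow {n : ℕ} (G : SimpleGraph (Fin n)) (B S : Finset (Fin n)) : Finset (Fin n) :=
  B ∪ Finset.univ.filter (fun x => ∃ b ∈ B, b ∈ S ∧ G.Adj b x)

open Classical in
theorem step_prob {n : ℕ} {G : SimpleGraph (Fin n)} {ε s q : ℝ} (hG : IsExpander n G ε s)
    (B : Finset (Fin n)) (F : Set (Sym2 (Fin n))) (hF : F ⊆ G.edgeSet) (hFB : F.ncard ≤ B.card)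
    (hB0 : 1 ≤ B.card) (hB : (B.card : ℝ) ≤ 2 / 3 * n) (d : ℕ) (hd : 1 ≤ d)
    (he0 : 0 < ε) (he1 : ε < 1) (hL : 1 ≤ Real.logb 2 n) (hs : (d : ℝ) + 2 ≤ s)
    (h0 : 0 ≤ q) (h1 : q ≤ 1) (hqd1 : 1 ≤ q * d) (hqd : q * d ≤ 2) :
    EE q Finset.univ (fun S => if ((grow (G.deleteEdges F) B S).card : ℝ) <
        (1 + ε / (24 * Real.logb 2 n ^ 2)) * B.card then 1 else 0) ≤
      Real.exp (-(ε ^ 2 * B.card / (2304 * Real.logb 2 n ^ 4 * d ^ 2))) := by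
  obtain ⟨H, hH1, hH2, hH3, hH4⟩ := exists_H hG B F hF hFB hB0 hB d hd he0 he1 hL hs
  set L := Real.logb 2 n with hLdef
  set K : Fin n → Finset (Fin n) := fun x => Finset.univ.filter (fun b => (b, x) ∈ H) with hK
  set f : Finset (Fin n) → ℝ := fun S => ∑ x, (1 - (if Disjoint S (K x) then (1 : ℝ) else 0))
    with hf
  have hKc : ∀ x, (K x).card = (H.filter (fun e => e.2 = x)).card := by
    intro x
    refine Finset.card_bij (fun b _ => (b, x)) ?_ ?_ ?_
    · intro b hb; simpa [hK] using hb
    · intro a _ b _ h; exact (Prod.ext_iff.1 h).1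
    · rintro ⟨a, y⟩ h
      simp only [Finset.mem_filter] at h
      obtain ⟨h, rfl⟩ := h
      exact ⟨a, by simpa [hK] using h, rfl⟩
  have hKd : ∀ a, (Finset.univ.filter (fun x => a ∈ K x)).card = (H.filter (fun e => e.1 = a)).card := by
    intro x
    refine Finset.card_bij (fun b _ => (x, b)) ?_ ?_ ?_
    · intro b hb; simpa [hK] using hb
    · intro a _ b _ h; exact (Prod.ext_iff.1 h).2
    · rintro ⟨a, y⟩ h
      simp only [Finset.mem_filter] at h
      obtain ⟨h, rfl⟩ := h
      exact ⟨y, by simpa [hK] using h, rfl⟩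
  have hKsum : ∑ x, ((K x).card : ℝ) = H.card := by
    simp only [hKc]
    exact_mod_cast (Finset.card_eq_sum_card_fiberwise (f := fun e : Fin n × Fin n => e.2)
      (s := H) (t := Finset.univ) (fun _ _ => by simp)).symm
  have hbpos : (1 : ℝ) ≤ B.card := by exact_mod_cast hB0
  have hdpos : (1 : ℝ) ≤ d := by exact_mod_cast hd
  have hLpos : 0 < L := by linarith
  have hL2 : 1 ≤ L ^ 2 := one_le_pow₀ hL
  -- mean
  have hmean : ε * B.card / (12 * L ^ 2) ≤ EE q Finset.univ f := by
    rw [hf, EE_sum]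
    simp only [EE_one_sub]
    have h2 : ∑ x, q * ((K x).card : ℝ) / 3 ≤ ∑ x, (1 - (1 - q) ^ (K x).card) :=
      Finset.sum_le_sum fun x _ => hit_prob h0 h1 ((hKc x).le.trans (hH3 x)) hqd
    refine le_trans ?_ h2
    rw [← Finset.sum_div, ← Finset.mul_sum, hKsum]
    have h3 := mul_le_mul_of_nonneg_left hH4 h0
    have h4 : 0 ≤ ε * B.card / (4 * L ^ 2) := by positivity
    have h5 : ε * B.card / (12 * L ^ 2) = (ε * B.card / (4 * L ^ 2)) / 3 := by
      field_simp; norm_num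
    rw [h5]
    have h6 := mul_le_mul_of_nonneg_right hqd1 h4
    linarith
  set D : Fin n → ℝ := fun a => if a ∈ B then (d : ℝ) else 0 with hD
  have hlip : ∀ a S, |f (insert a S) - f S| ≤ D a := by
    intro a S
    have e1 : f (insert a S) - f S = ∑ x, ((if Disjoint S (K x) then (1 : ℝ) else 0) -
        (if Disjoint (insert a S) (K x) then (1 : ℝ) else 0)) := by
      rw [hf, ← Finset.sum_sub_distrib]
      exact Finset.sum_congr rfl fun x _ => by ring
    have e2 : ∀ x, |((if Disjoint S (K x) then (1 : ℝ) else 0) -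
        (if Disjoint (insert a S) (K x) then (1 : ℝ) else 0))| ≤ if a ∈ K x then (1 : ℝ) else 0 := by
      intro x
      by_cases h1 : a ∈ K x <;> by_cases h2 : Disjoint S (K x) <;>
        simp [Finset.disjoint_insert_left, h1, h2]
    rw [e1]
    refine (Finset.abs_sum_le_sum_abs _ _).trans ((Finset.sum_le_sum fun x _ => e2 x).trans ?_)
    rw [Finset.sum_boole, hKd]
    simp only [hD]
    split_ifs with haB
    · exact_mod_cast hH2 a
    · have : H.filter (fun e => e.1 = a) = ∅ := by
        rw [Finset.filter_eq_empty_iff]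
        intro e he h
        exact haB (h ▸ (hH1 e he).1)
      simp [this]
  have hQ : ∑ a, D a ^ 2 ≤ B.card * (d : ℝ) ^ 2 := by
    simp [hD, ite_pow]
  have ht := tail (l := ε / (48 * L ^ 2 * d ^ 2)) (t := ε * B.card / (24 * L ^ 2)) h0 h1
    (by positivity) D Finset.univ (by
      intro a
      have : D a ≤ d := by simp only [hD]; split_ifs <;> linarith
      refine (mul_le_mul_of_nonneg_left this (by positivity)).trans ?_
      rw [div_mul_eq_mul_div, div_le_one (by positivity)]
      have : 1 ≤ L ^ 2 * d := one_le_mul_of_one_le_of_one_le hL2 hdpos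
      nlinarith) f hlip hQ hmean
  refine le_trans (EE_mono h0 h1 _ ?_) (ht.trans (le_of_eq ?_))
  · intro S
    have hfS : f S ≤ ((Finset.univ.filter
      (fun x => ∃ b ∈ B, b ∈ S ∧ (G.deleteEdges F).Adj b x ∧ x ∉ B)).card : ℝ) := by
      rw [Finset.card_filter]
      push_cast
      refine Finset.sum_le_sum fun x _ => ?_
      by_cases hx : Disjoint S (K x)
      · simp only [hx, if_true, sub_self]; split_ifs <;> norm_num
      · rw [if_neg hx, if_pos]
        · norm_num
        · rw [Finset.not_disjoint_iff] at hx
          obtain ⟨b, hbS, hbK⟩ := hx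
          have hb : (b, x) ∈ H := by simpa [hK] using hbK
          have := hH1 _ hb
          exact ⟨b, this.1, hbS, this.2.2, this.2.1⟩
    have hcard : B.card + (Finset.univ.filter
      (fun x => ∃ b ∈ B, b ∈ S ∧ (G.deleteEdges F).Adj b x ∧ x ∉ B)).card ≤
      (grow (G.deleteEdges F) B S).card := by
      unfold grow
      rw [← Finset.card_union_of_disjoint]
      · apply Finset.card_le_card
        apply Finset.union_subset_union_right
        intro x hx
        simp only [Finset.mem_filter, Finset.mem_univ, true_and] at *
        obtain ⟨b, h1, h2, h3, _⟩ := hx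
        exact ⟨b, h1, h2, h3⟩
      · rw [Finset.disjoint_left]
        intro x hx hx'
        simp only [Finset.mem_filter, Finset.mem_univ, true_and] at hx'
        obtain ⟨b, _, _, _, h⟩ := hx'
        exact h hx
    have hcard' : (B.card : ℝ) + ((Finset.univ.filter
      (fun x => ∃ b ∈ B, b ∈ S ∧ (G.deleteEdges F).Adj b x ∧ x ∉ B)).card : ℝ) ≤
      ((grow (G.deleteEdges F) B S).card : ℝ) := by
      exact_mod_cast hcard
    by_cases hc : ((grow (G.deleteEdges F) B S).card : ℝ) <
        (1 + ε / (24 * L ^ 2)) * B.card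
    · rw [if_pos hc, if_pos]
      have e1 : ε * B.card / (12 * L ^ 2) - ε * B.card / (24 * L ^ 2) =
        ε / (24 * L ^ 2) * B.card := by field_simp; norm_num
      rw [e1]
      linarith
    · rw [if_neg hc]
      split_ifs <;> norm_num
  · congr 1
    field_simp
    norm_num

def Reach {n : ℕ} (G : SimpleGraph (Fin n)) (U : Set (Fin n)) (A : Finset (Fin n)) (k : ℕ)
    (v : Fin n) : Prop :=
  ∃ u ∈ U, ∃ w : G.Walk u v, w.length ≤ k ∧ ∀ z ∈ w.support, z ≠ u → z ≠ v → z ∈ A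

theorem Reach.mono {n : ℕ} {G : SimpleGraph (Fin n)} {U : Set (Fin n)} {A A' : Finset (Fin n)}
    {k k' : ℕ} {v : Fin n} (h : Reach G U A k v) (hA : A ⊆ A') (hk : k ≤ k') :
    Reach G U A' k' v := by
  obtain ⟨u, hu, w, hw, h⟩ := h
  exact ⟨u, hu, w, hw.trans hk, fun z h1 h2 h3 => hA (h z h1 h2 h3)⟩

theorem Reach.step {n : ℕ} {G : SimpleGraph (Fin n)} {U : Set (Fin n)} {A A' : Finset (Fin n)}
    {k : ℕ} {b x : Fin n} (h : Reach G U A k b) (hA : A ⊆ A') (hb : b ∈ A') (hbx : G.Adj b x) :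
    Reach G U A' (k + 1) x := by
  obtain ⟨u, hu, w, hw, h⟩ := h
  refine ⟨u, hu, w.concat hbx, by simpa using hw, ?_⟩
  intro z hz h1 h2
  rw [SimpleGraph.Walk.support_concat] at hz
  simp only [List.mem_append, List.mem_singleton] at hz
  rcases hz with hz | hz
  · by_cases hzb : z = b
    · exact hzb ▸ hb
    · exact hA (h z hz h1 hzb)
  · exact absurd hz h2

theorem Reach.ball {n : ℕ} {G : SimpleGraph (Fin n)} {U : Set (Fin n)} {A : Finset (Fin n)}
    {k : ℕ} {v : Fin n} {ℓ : ℝ} (h : Reach G U A k v) (hv : v ∈ A) (hk : (k : ℝ) ≤ ℓ) :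
    v ∈ _root_.ball G ℓ U (↑A) := by
  obtain ⟨u, hu, w, hw, h⟩ := h
  refine ⟨hv, u, hu, w.bypass, w.bypass_isPath, ?_, ?_⟩
  · refine le_trans ?_ hk
    exact_mod_cast (w.length_bypass_le_length).trans hw
  · intro z hz h1 h2
    exact h z (w.support_bypass_subset_support hz) h1 h2

open Classical in
theorem main_ind {n : ℕ} {G : SimpleGraph (Fin n)} {U : Set (Fin n)} {q r γ δ δf M ℓ P : ℝ}
    (hq0 : 0 ≤ q) (hq1 : q ≤ 1) (hr0 : 0 ≤ r) (hr1 : r ≤ 1) (hδ : 0 ≤ δ) (hδf : 0 ≤ δf)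
    (hγ : 0 ≤ γ)
    (hstep : ∀ B : Finset (Fin n), M ≤ (B.card : ℝ) → (B.card : ℝ) ≤ 2 / 3 * n →
      EE q Finset.univ (fun S => if ((grow G B S).card : ℝ) < (1 + γ) * B.card then 1 else 0) ≤ δ)
    (hfin : ∀ B : Finset (Fin n), 2 / 3 * n ≤ (B.card : ℝ) →
      EE r Finset.univ (fun S => if ((S ∩ B).card : ℝ) ≤ P / 2 then 1 else 0) ≤ δf)
    (m : ℕ) : ∀ (k : ℕ) (A B : Finset (Fin n)), ((k + m : ℕ) : ℝ) ≤ ℓ →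
      (∀ v ∈ B, Reach G U A k v) → M ≤ (B.card : ℝ) → 2 / 3 * n ≤ B.card * (1 + γ) ^ m →
      EE (1 - (1 - q) ^ m * (1 - r)) Finset.univ (fun S => if ((A ∪ S).card : ℝ) ≤ P ∧
        ((ball G ℓ U (↑(A ∪ S))).ncard : ℝ) ≤ ((A ∪ S).card : ℝ) / 2 then 1 else 0) ≤
        m * δ + δf := by
  induction m with
  | zero =>
    intro k A B hk hR hM hB
    simp only [pow_zero, mul_one, one_mul, sub_sub_cancel, Nat.cast_zero, zero_mul, zero_add] at *
    refine le_trans (EE_mono hr0 hr1 _ ?_) (hfin B hB)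
    intro S
    by_cases hS : ((S ∩ B).card : ℝ) ≤ P / 2
    · rw [if_pos hS]; split_ifs <;> norm_num
    · rw [if_neg hS, if_neg]
      rintro ⟨h1, h2⟩
      apply hS
      have hsub : (↑(S ∩ B) : Set (Fin n)) ⊆ ball G ℓ U (↑(A ∪ S)) := by
        intro v hv
        rw [Finset.mem_coe, Finset.mem_inter] at hv
        exact ((hR v hv.2).mono Finset.subset_union_left le_rfl).ball
          (Finset.mem_union_right _ hv.1) (by simpa using hk)
      have := Set.ncard_le_ncard hsub (Set.toFinite _)
      rw [Set.ncard_coe_finset] at this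
      have h3 : ((S ∩ B).card : ℝ) ≤ (ball G ℓ U (↑(A ∪ S))).ncard := by exact_mod_cast this
      linarith
  | succ m ih =>
    intro k A B hk hR hM hB
    set rm := 1 - (1 - q) ^ m * (1 - r) with hrm
    have hx0 : 0 ≤ (1 - q) ^ m := pow_nonneg (by linarith) m
    have hx1 : (1 - q) ^ m ≤ 1 := pow_le_one₀ (by linarith) (by linarith)
    have hrm0 : 0 ≤ rm := by rw [hrm]; nlinarith
    have hrm1 : rm ≤ 1 := by rw [hrm]; nlinarith
    rw [show 1 - (1 - q) ^ (m + 1) * (1 - r) = 1 - (1 - q) * (1 - rm) by rw [hrm]; ring, EE_union]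
    simp only [← Finset.union_assoc]
    by_cases hBn : 2 / 3 * n ≤ (B.card : ℝ)
    · have : ∀ A1 : Finset (Fin n), EE rm Finset.univ (fun C =>
          if ((A ∪ A1 ∪ C).card : ℝ) ≤ P ∧ ((ball G ℓ U (↑(A ∪ A1 ∪ C))).ncard : ℝ) ≤
            ((A ∪ A1 ∪ C).card : ℝ) / 2 then 1 else 0) ≤ m * δ + δf := by
        intro A1
        refine ih k (A ∪ A1) B (le_trans ?_ hk) ?_ hM ?_
        · push_cast; linarith
        · intro v hv
          exact (hR v hv).mono Finset.subset_union_left le_rfl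
        · have : 1 ≤ (1 + γ) ^ m := one_le_pow₀ (by linarith)
          nlinarith [(Nat.cast_nonneg B.card : (0 : ℝ) ≤ B.card)]
      refine (EE_mono hq0 hq1 _ this).trans ?_
      rw [EE_const]; push_cast; linarith
    · push Not at hBn
      have : ∀ A1 : Finset (Fin n), EE rm Finset.univ (fun C =>
          if ((A ∪ A1 ∪ C).card : ℝ) ≤ P ∧ ((ball G ℓ U (↑(A ∪ A1 ∪ C))).ncard : ℝ) ≤
            ((A ∪ A1 ∪ C).card : ℝ) / 2 then 1 else 0) ≤ 
          (if ((grow G B A1).card : ℝ) < (1 + γ) * B.card then 1 else 0) +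
          (m * δ + δf) := by
        intro A1
        split_ifs with hc
        · have h1 : EE rm Finset.univ (fun C =>
          if ((A ∪ A1 ∪ C).card : ℝ) ≤ P ∧ ((ball G ℓ U (↑(A ∪ A1 ∪ C))).ncard : ℝ) ≤
            ((A ∪ A1 ∪ C).card : ℝ) / 2 then 1 else 0) ≤
            EE rm (Finset.univ : Finset (Fin n)) (fun _ => (1 : ℝ)) := by
            refine EE_mono hrm0 hrm1 _ fun C => ?_
            split_ifs <;> norm_num
          rw [EE_const] at h1
          have : 0 ≤ m * δ + δf := by positivity
          linarith
        · push Not at hc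
          rw [zero_add]
          refine ih (k + 1) (A ∪ A1) (grow G B A1) (le_trans ?_ hk) ?_ ?_ ?_
          · push_cast; linarith
          · intro v hv
            rcases Finset.mem_union.1 hv with hv | hv
            · exact (hR v hv).mono Finset.subset_union_left (Nat.le_succ _)
            · obtain ⟨b, h1, h2, h3⟩ := (Finset.mem_filter.1 hv).2
              exact (hR b h1).step Finset.subset_union_left (Finset.mem_union_right _ h2) h3
          · refine hM.trans ?_
            exact_mod_cast Finset.card_le_card Finset.subset_union_left
          · refine hB.trans ?_
            rw [pow_succ', ← mul_assoc]
            apply mul_le_mul_of_nonneg_right _ (by positivity)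
            rw [mul_comm]; exact hc
      refine (EE_mono hq0 hq1 _ this).trans ?_
      rw [EE_add, EE_const]
      have := hstep B hM hBn.le
      push_cast
      linarith

open Classical in
theorem bernoulli_eq (n : ℕ) (p : ℝ) (E : Set (Finset (Fin n))) :
    bernoulliProb n p E = EE p Finset.univ (fun S => if S ∈ E then 1 else 0) := by
  unfold bernoulliProb EE
  rw [Finset.powerset_univ]
  refine Finset.sum_congr rfl fun S _ => ?_
  rw [Set.indicator_apply, Finset.card_univ, Fintype.card_fin]
  by_cases h : S ∈ E <;> simp [h]

theorem grow_aux {n m : ℕ} {L ε γ : ℝ} (hL : L = Real.logb 2 n) (hn1 : 1 ≤ (n : ℝ))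
    (hL1 : 1 ≤ L) (hεL : 2 ^ 100 ≤ ε * L) (hγ : γ = ε / (24 * L ^ 2)) (hγ0 : 0 < γ) (hγ1 : γ ≤ 1)
    (hmlow : L ^ 4 / 2 ≤ m) : (n : ℝ) ≤ (1 + γ) ^ m := by
  have hL0 : 0 < L := by linarith
  have h1 : γ / 2 ≤ Real.log (1 + γ) := by
    refine le_trans ?_ (Real.one_sub_inv_le_log_of_pos (by linarith))
    have : (1 + γ)⁻¹ ≤ 1 - γ / 2 := by
      rw [inv_le_iff_one_le_mul₀ (by linarith)]
      nlinarith
    linarith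
  have h2 : Real.log n ≤ L := by
    rw [hL, Real.logb, le_div_iff₀ (Real.log_pos (by norm_num))]
    have := Real.log_nonneg hn1
    have := Real.log_two_lt_d9
    nlinarith
  have h3 : L ≤ m * Real.log (1 + γ) := by
    calc L ≤ L ^ 4 / 2 * (γ / 2) := by
          have : L ^ 4 / 2 * (γ / 2) = (ε * L) * L / 96 := by rw [hγ]; field_simp; ring
          rw [this, le_div_iff₀ (by norm_num)]
          have h9 : (96 : ℝ) ≤ ε * L := le_trans (by norm_num) hεL
          have h10 := mul_le_mul_of_nonneg_right h9 (by linarith : 0 ≤ L)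
          linarith
      _ ≤ m * Real.log (1 + γ) := mul_le_mul hmlow h1 (by positivity) (by positivity)
  calc (n : ℝ) = Real.exp (Real.log n) := (Real.exp_log (by linarith)).symm
    _ ≤ Real.exp (m * Real.log (1 + γ)) := Real.exp_le_exp.2 (h2.trans h3)
    _ = (1 + γ) ^ m := by
      rw [← Real.log_pow, Real.exp_log (by positivity)]

set_option maxHeartbeats 2000000 in
/-- Well-expanding sets reach more than half of a `p`-random vertex set by short paths,
with probability at least `1 - e^{-c|U|(log n)²}`. -/
theorem statement19 :
    ∃ c : ℝ, 0 < c ∧ ∃ N : ℕ, ∀ n : ℕ, N ≤ n →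
      ∀ (p ε s : ℝ) (G : SimpleGraph (Fin n)) (U : Set (Fin n))
        (F : Set (Sym2 (Fin n))),
        0 < p → p < 1 →
        IsExpander n G ε s →
        (2 : ℝ) ^ (-(100 : ℤ)) < ε → ε < 1 →
        20 * p ^ (-(3 : ℤ)) * Real.logb 2 n ^ 13 ≤ s →
        (U.ncard : ℝ) * p ^ (-(4 : ℤ)) * Real.logb 2 n ^ 24 ≤
          ((extNbhd G U).ncard : ℝ) →
        F ⊆ G.edgeSet → F.ncard ≤ U.ncard →
        1 - Real.exp (-(c * U.ncard * Real.logb 2 n ^ 2)) ≤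
          bernoulliProb n p
            {S : Finset (Fin n) | (S.card : ℝ) / 2 <
              ((ball (G.deleteEdges F) (Real.logb 2 n ^ 4) U (↑S)).ncard : ℝ)} := by
  classical
  refine ⟨1, one_pos, ?_⟩
  have hev : ∀ᶠ n : ℕ in Filter.atTop, (2 : ℝ) ^ 200 ≤ Real.logb 2 n :=
    ((Real.tendsto_logb_atTop (by norm_num)).comp tendsto_natCast_atTop_atTop).eventually_ge_atTop _
  obtain ⟨N, hN⟩ := Filter.eventually_atTop.1 hev
  refine ⟨N, fun n hn p ε s G U F hp0 hp1 hG hε hε1 hs hNU hF hFU => ?_⟩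
  have hLK := hN n hn
  set L := Real.logb 2 n with hL
  rw [bernoulli_eq]
  set x : ℝ := (U.ncard : ℝ) with hx
  rcases Nat.eq_zero_or_pos U.ncard with hU0 | hUpos
  · rw [hx, hU0]
    have := EE_mono hp0.le hp1.le (Finset.univ : Finset (Fin n)) (f := fun _ => 0)
      (g := fun S => if S ∈ {S : Finset (Fin n) | (S.card : ℝ) / 2 <
              ((ball (G.deleteEdges F) (L ^ 4) U (↑S)).ncard : ℝ)} then (1 : ℝ) else 0)
      (fun S => by beta_reduce; split_ifs <;> norm_num)
    rw [EE_const] at this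
    simpa using this
  have hx1 : 1 ≤ x := by rw [hx]; exact_mod_cast hUpos
  clear_value x
  have hε' : 1 / 2 ^ 100 < ε := by
    have h := hε
    rw [zpow_neg] at h
    rw [one_div]
    exact_mod_cast h
  have hε0 : 0 < ε := lt_trans (by positivity) hε'
  have hL1 : 1 ≤ L := le_trans (by norm_num) hLK
  have hL0 : 0 < L := by linarith
  have hεL : 2 ^ 100 ≤ ε * L := by
    calc (2 : ℝ) ^ 100 = 1 / 2 ^ 100 * 2 ^ 200 := by norm_num
      _ ≤ ε * L := mul_le_mul hε'.le hLK (by positivity) hε0.le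
  set G' := G.deleteEdges F with hG'
  have hn1 : 1 ≤ (n : ℝ) := by
    have : n ≠ 0 := by
      rintro rfl
      simp [hL] at hL1
      linarith
    exact_mod_cast Nat.one_le_iff_ne_zero.2 this
  have hz4 : p ^ (-(4 : ℤ)) = 1 / p ^ 4 := by rw [zpow_neg, one_div]; norm_cast
  have hz3 : p ^ (-(3 : ℤ)) = 1 / p ^ 3 := by rw [zpow_neg, one_div]; norm_cast
  rw [hz4] at hNU
  rw [hz3] at hs
  set M := x * (1 / p ^ 4) * L ^ 24 with hM
  clear_value M
  have hinvp : 1 ≤ 1 / p := (one_le_div hp0).2 hp1.le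
  have hp4 : p ^ 4 * M = x * L ^ 24 := by rw [hM]; field_simp
  have hMx : x ≤ M := by
    rw [hM]
    have h1 : 1 ≤ 1 / p ^ 4 := (one_le_div (by positivity)).2 (pow_le_one₀ hp0.le hp1.le)
    have h2 : 1 ≤ L ^ 24 := one_le_pow₀ hL1
    have h3 : 1 ≤ 1 / p ^ 4 * L ^ 24 := one_le_mul_of_one_le_of_one_le h1 h2
    nlinarith
  have hMn : M ≤ n := by
    refine hNU.trans ?_
    have := Set.ncard_le_card (extNbhd G U)
    rw [Nat.card_fin] at this
    exact_mod_cast this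
  have hp2n : x * L ^ 24 ≤ p ^ 2 * n := by
    rw [← hp4]
    have h1 : p ^ 4 ≤ p ^ 2 := pow_le_pow_of_le_one hp0.le hp1.le (by norm_num)
    exact mul_le_mul h1 hMn (by linarith) (by positivity)
  -- parameters
  set q := p / (100 * L ^ 4) with hq
  have hq0 : 0 < q := by positivity
  clear_value q
  have hL4 : 1 ≤ L ^ 4 := one_le_pow₀ hL1
  have hq1 : q ≤ 1 := by
    rw [hq, div_le_one (by positivity)]; linarith
  set d := ⌈1 / q⌉₊ with hd
  have hd1 : 1 / q ≤ d := Nat.le_ceil _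
  have hd2 : (d : ℝ) < 1 / q + 1 := Nat.ceil_lt_add_one (by positivity)
  have hqd1 : 1 ≤ q * d := by
    rw [div_le_iff₀ hq0] at hd1; linarith
  clear_value d
  have hqq : q * (1 / q) = 1 := by field_simp
  have hqd2 : q * d ≤ 2 := by
    have := mul_le_mul_of_nonneg_left hd2.le hq0.le
    rw [mul_add, hqq] at this
    linarith
  have hdn : 1 ≤ d := by
    rw [Nat.one_le_iff_ne_zero]
    intro h
    rw [h] at hqd1
    norm_num at hqd1
  have hdp : p * d ≤ 200 * L ^ 4 := by
    have : q * d = p * d / (100 * L ^ 4) := by rw [hq]; ring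
    rw [this, div_le_iff₀ (by positivity)] at hqd2
    linarith
  have hd0 : (1 : ℝ) ≤ d := by exact_mod_cast hdn
  have hds : (d : ℝ) + 2 ≤ s := by
    refine le_trans ?_ hs
    have e : 20 * (1 / p ^ 3) * L ^ 13 = 20 * L ^ 13 / p ^ 3 := by ring
    rw [e, le_div_iff₀ (by positivity)]
    have h1 : p ^ 3 ≤ p := by
      calc p ^ 3 ≤ p ^ 1 := pow_le_pow_of_le_one hp0.le hp1.le (by norm_num)
        _ = p := pow_one p
    have h2 : ((d : ℝ) + 2) * p ^ 3 ≤ (d + 2) * p := mul_le_mul_of_nonneg_left h1 (by positivity)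
    have h3 : L ^ 4 * 2 ^ 200 ≤ L ^ 13 := by
      have : L ^ 1 ≤ L ^ 9 := pow_le_pow_right₀ hL1 (by norm_num)
      calc L ^ 4 * 2 ^ 200 ≤ L ^ 4 * L ^ 9 := by
            apply mul_le_mul_of_nonneg_left _ (by positivity)
            rw [pow_one] at this
            linarith
        _ = L ^ 13 := by ring
    nlinarith
  set γ := ε / (24 * L ^ 2) with hγ
  have hγ0 : 0 < γ := by positivity
  have hL2 : 1 ≤ L ^ 2 := one_le_pow₀ hL1
  have hγ1 : γ ≤ 1 := by rw [hγ, div_le_one (by positivity)]; linarith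
  clear_value γ
  set m := ⌊L ^ 4⌋₊ - 1 with hm
  have hfl1 : (⌊L ^ 4⌋₊ : ℝ) ≤ L ^ 4 := Nat.floor_le (by positivity)
  have hfl2 : L ^ 4 < (⌊L ^ 4⌋₊ : ℝ) + 1 := Nat.lt_floor_add_one _
  have hfl3 : 1 ≤ ⌊L ^ 4⌋₊ := Nat.one_le_floor_iff _ |>.2 hL4
  have hmc : (m : ℝ) = ⌊L ^ 4⌋₊ - 1 := by rw [hm]; push_cast [hfl3]; ring
  clear_value m
  have hL4' : 4 ≤ L ^ 4 := by
    have : L ^ 1 ≤ L ^ 4 := pow_le_pow_right₀ hL1 (by norm_num)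
    rw [pow_one] at this
    have : (4 : ℝ) ≤ 2 ^ 200 := by norm_num
    linarith
  have hmlow : L ^ 4 / 2 ≤ m := by rw [hmc]; linarith
  have hgrow : (n : ℝ) ≤ (1 + γ) ^ m := grow_aux hL hn1 hL1 hεL hγ hγ0 hγ1 hmlow
  have hqm : 1 - p / 100 ≤ (1 - q) ^ m := by
    have h1 : 1 + (m : ℝ) * (-q) ≤ (1 + -q) ^ m := one_add_mul_le_pow (by linarith) m
    have h2 : m * q ≤ p / 100 := by
      have : L ^ 4 * q = p / 100 := by rw [hq]; field_simp
      rw [← this]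
      apply mul_le_mul_of_nonneg_right _ hq0.le
      linarith
    rw [← sub_eq_add_neg] at h1
    linarith
  have hqmpos : 0 < (1 - q) ^ m := by linarith
  have hqm1 : (1 - q) ^ m ≤ 1 := by
    apply pow_le_one₀ (by linarith) (by linarith)
  set r := 1 - (1 - p) / (1 - q) ^ m with hr
  clear_value r
  have hr1 : r ≤ 1 := by
    have : 0 ≤ (1 - p) / (1 - q) ^ m := div_nonneg (by linarith) hqmpos.le
    linarith
  have hrp : 99 / 100 * p ≤ r := by
    have : (1 - p) / (1 - q) ^ m ≤ 1 - 99 / 100 * p := by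
      rw [div_le_iff₀ hqmpos]
      have h1 := mul_le_mul_of_nonneg_left hqm (by linarith : 0 ≤ 1 - 99 / 100 * p)
      refine le_trans ?_ h1
      have h2 : (1 - 99 / 100 * p) * (1 - p / 100) = 1 - p + 99 / 10000 * p ^ 2 := by ring
      have h3 := sq_nonneg p
      linarith
    linarith
  have hr0 : 0 ≤ r := le_trans (by positivity) hrp
  have hpr : 1 - (1 - q) ^ m * (1 - r) = p := by
    rw [hr]; field_simp; ring
  have hL6a : L ^ 6 + L ^ 6 * 399 ≤ L ^ 24 := by
    have h1 : L ^ 7 ≤ L ^ 24 := pow_le_pow_right₀ hL1 (by norm_num)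
    have h2 : L ^ 6 * 2 ^ 200 ≤ L ^ 6 * L := mul_le_mul_of_nonneg_left hLK (by positivity)
    have h3 : L ^ 6 * L = L ^ 7 := by ring
    have h4 : L ^ 6 * 400 ≤ L ^ 6 * 2 ^ 200 :=
      mul_le_mul_of_nonneg_left (by norm_num) (by positivity)
    linarith
  have hfin0 : x * L ^ 6 ≤ 1 / 400 * (p ^ 2 * n) := by
    have := mul_le_mul_of_nonneg_left hL6a (by linarith : 0 ≤ x)
    linarith
  set δ := Real.exp (-(x * L ^ 6)) with hδ
  have hδ0 : 0 ≤ δ := (Real.exp_pos _).le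
  clear_value δ
  have hfin : ∀ B : Finset (Fin n), 2 / 3 * n ≤ (B.card : ℝ) →
      EE r Finset.univ (fun S => if ((S ∩ B).card : ℝ) ≤ (11 / 10 * (p * n)) / 2 then 1 else 0)
        ≤ δ := by
    intro B hB
    have h := tail (q := r) (l := p / 20) (t := 11 / 100 * (p * n)) (m := 66 / 100 * (p * n))
      (Q := n) hr0 hr1 (by positivity) (fun _ => 1) Finset.univ (by intro a; linarith)
      (fun S => ((S ∩ B).card : ℝ)) (card_inter_lip B) (by simp) (by
        rw [EE_card_inter]
        have : 99 / 100 * p * (2 / 3 * n) ≤ r * B.card :=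
          mul_le_mul hrp hB (by positivity) hr0
        linarith)
    have e : 66 / 100 * (p * n) - 11 / 100 * (p * n) = (11 / 10 * (p * n)) / 2 := by ring
    rw [e] at h
    refine h.trans ?_
    rw [hδ]
    refine Real.exp_le_exp.2 ?_
    have h9 : 0 ≤ p ^ 2 * n := by positivity
    ring_nf at h9 hfin0 ⊢
    linarith
  have hover : EE p Finset.univ (fun S : Finset (Fin n) =>
      if -((S ∩ Finset.univ).card : ℝ) ≤ -(p * n) - 1 / 10 * (p * n) then 1 else 0) ≤ δ := by
    have h := tail (q := p) (l := p / 20) (t := 1 / 10 * (p * n)) (m := -(p * n))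
      (Q := n) hp0.le hp1.le (by positivity) (fun _ => 1) Finset.univ (by intro a; linarith)
      (fun S : Finset (Fin n) => -((S ∩ Finset.univ).card : ℝ)) (by
        intro a S
        have := card_inter_lip Finset.univ a S
        rw [abs_le] at *
        constructor <;> linarith) (by simp) (by
        have := EE_mul p Finset.univ (-1) (fun S : Finset (Fin n) =>
          ((S ∩ Finset.univ).card : ℝ))
        simp only [neg_one_mul] at this
        rw [this, EE_card_inter]
        simp)
    refine h.trans ?_
    rw [hδ]
    refine Real.exp_le_exp.2 ?_
    have h9 : 0 ≤ p ^ 2 * n := by positivity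
    ring_nf at h9 hfin0 ⊢
    linarith
  have hstep : ∀ B : Finset (Fin n), M ≤ (B.card : ℝ) → (B.card : ℝ) ≤ 2 / 3 * n →
      EE q Finset.univ (fun S => if ((grow G' B S).card : ℝ) < (1 + γ) * B.card then 1 else 0) ≤ δ := by
    intro B hMB hB
    rw [hγ, hG', hL]
    have hUB : U.ncard ≤ B.card := by
      have h := hMx.trans hMB
      rw [hx] at h
      exact_mod_cast h
    refine (step_prob hG B F hF (hFU.trans hUB) (hUpos.trans_le hUB) hB d hdn hε0 hε1 hL1 hds
      hq0.le hq1 hqd1 hqd2).trans ?_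
    rw [hδ]
    refine Real.exp_le_exp.2 (neg_le_neg ?_)
    rw [← hL, le_div_iff₀ (by positivity)]
    -- x L^6 * (2304 L^4 d^2) ≤ ε^2 B
    have h1 : p ^ 2 * d ^ 2 ≤ 40000 * L ^ 8 := by
      calc p ^ 2 * (d : ℝ) ^ 2 = (p * d) ^ 2 := by ring
        _ ≤ (200 * L ^ 4) ^ 2 := pow_le_pow_left₀ (by positivity) hdp 2
        _ = 40000 * L ^ 8 := by ring
    have h2 : (2 ^ 100) ^ 2 ≤ (ε * L) ^ 2 := pow_le_pow_left₀ (by positivity) hεL 2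
    have h3 : L ^ 18 ≤ L ^ 22 := pow_le_pow_right₀ hL1 (by norm_num)
    have h4 : p ^ 4 * (x * L ^ 6 * (2304 * L ^ 4 * d ^ 2)) ≤ p ^ 4 * (ε ^ 2 * M) := by
      have hp21 : p ^ 2 ≤ 1 := pow_le_one₀ hp0.le hp1.le
      calc p ^ 4 * (x * L ^ 6 * (2304 * L ^ 4 * d ^ 2))
          = (x * L ^ 10 * 2304) * (p ^ 2 * (p ^ 2 * d ^ 2)) := by ring
        _ ≤ (x * L ^ 10 * 2304) * (1 * (40000 * L ^ 8)) := by
            apply mul_le_mul_of_nonneg_left _ (by positivity)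
            exact mul_le_mul hp21 h1 (by positivity) (by norm_num)
        _ = (x * L ^ 18) * 92160000 := by ring
        _ ≤ (x * L ^ 22) * (ε * L) ^ 2 := by
            apply mul_le_mul (mul_le_mul_of_nonneg_left h3 (by linarith)) _ (by norm_num)
              (by positivity)
            refine le_trans ?_ h2
            norm_num
        _ = ε ^ 2 * (x * L ^ 24) := by ring
        _ = p ^ 4 * (ε ^ 2 * M) := by rw [← hp4]; ring
    have h5 := le_of_mul_le_mul_left h4 (by positivity)
    refine h5.trans (mul_le_mul_of_nonneg_left hMB (by positivity))
  -- initial set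
  let B0 : Finset (Fin n) := (U ∪ extNbhd G' U).toFinset
  have hB0r : ∀ v ∈ B0, Reach G' U ∅ 1 v := by
    intro v hv
    rw [Set.mem_toFinset] at hv
    rcases hv with hv | ⟨_, u, hu, huv⟩
    · exact ⟨v, hv, SimpleGraph.Walk.nil, by simp, by simp⟩
    · refine ⟨u, hu, SimpleGraph.Walk.cons huv SimpleGraph.Walk.nil, by simp, ?_⟩
      intro z hz h1 h2
      simp at hz
      tauto
  have hB0c : M ≤ (B0.card : ℝ) := by
    refine hNU.trans ?_
    have h1 : (U ∪ extNbhd G' U).ncard = U.ncard + (extNbhd G' U).ncard :=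
      Set.ncard_union_eq (Set.disjoint_left.2 fun v hv hv' => hv'.1 hv) (Set.toFinite _)
        (Set.toFinite _)
    have h2 : (extNbhd G U).ncard ≤ (extNbhd G' U).ncard + F.ncard := by
      have h3 : (extNbhd G U \ extNbhd G' U).ncard ≤ F.ncard := by
        have : ∀ v ∈ extNbhd G U \ extNbhd G' U, ∃ u ∈ U, s(u, v) ∈ F := by
          rintro v ⟨⟨hv, u, hu, huv⟩, hv'⟩
          refine ⟨u, hu, ?_⟩
          by_contra h
          exact hv' ⟨hv, u, hu, by rw [hG', SimpleGraph.deleteEdges_adj]; exact ⟨huv, h⟩⟩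
        choose! g hg1 hg2 using this
        refine Set.ncard_le_ncard_of_injOn (fun v => s(g v, v)) hg2 ?_ (Set.toFinite _)
        intro v hv w hw h
        simp only [Sym2.eq_iff] at h
        rcases h with h | h
        · exact h.2
        · exact absurd (h.1 ▸ hg1 v hv) hw.1.1
      have := Set.ncard_le_ncard_sdiff_add_ncard (extNbhd G U) (extNbhd G' U) (Set.toFinite _)
      omega
    have h4 : B0.card = (U ∪ extNbhd G' U).ncard := (Set.ncard_eq_toFinset_card' _).symm
    exact_mod_cast (by omega : (extNbhd G U).ncard ≤ B0.card)
  have hmain := main_ind (G := G') (U := U) (q := q) (r := r) (γ := γ) (δ := δ) (δf := δ) (M := M)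
    (P := 11 / 10 * (p * n)) (ℓ := L ^ 4) hq0.le hq1 hr0 hr1 hδ0
    hδ0 hγ0.le hstep hfin m 1 ∅ B0 (by push_cast; rw [hmc]; linarith) hB0r hB0c (by
      have h1 : 1 ≤ (B0.card : ℝ) := by linarith
      have h2 : 0 ≤ (1 + γ) ^ m := by positivity
      have h3 := mul_le_mul_of_nonneg_right h1 h2
      linarith)
  rw [hpr] at hmain
  simp only [Finset.empty_union] at hmain
  -- conclude
  have hsum : (1 : ℝ) ≤ EE p Finset.univ (fun S => if S ∈ {S : Finset (Fin n) | (S.card : ℝ) / 2 <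
              ((ball G' (L ^ 4) U (↑S)).ncard : ℝ)} then (1 : ℝ) else 0) + ((m * δ + δ) + δ) := by
    refine le_trans ?_ (add_le_add_right (add_le_add hmain hover) _)
    rw [← EE_add, ← EE_add]
    have h := EE_const p (Finset.univ : Finset (Fin n)) 1
    refine h.ge.trans ?_
    refine EE_mono hp0.le hp1.le _ fun S => ?_
    simp only [Set.mem_ofPred_eq, Finset.inter_univ]
    by_cases h1 : (S.card : ℝ) / 2 < ((ball G' (L ^ 4) U (↑S)).ncard : ℝ)
    · rw [if_pos h1]
      split_ifs <;> norm_num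
    · rw [if_neg h1]
      by_cases h2 : (S.card : ℝ) ≤ 11 / 10 * (p * n)
      · rw [if_pos ⟨h2, not_lt.1 h1⟩]
        split_ifs <;> norm_num
      · rw [if_neg (fun h => h2 h.1), if_pos (by push Not at h2; linarith)]
        norm_num
  have hfinal : (m * δ + δ) + δ ≤ Real.exp (-(1 * x * L ^ 2)) := by
    have h1 : (m : ℝ) + 2 ≤ Real.exp (L ^ 4 + 1) := by
      have := Real.add_one_le_exp (L ^ 4 + 1)
      rw [hmc]; linarith
    calc (m * δ + δ) + δ = (m + 2) * δ := by ring
      _ ≤ Real.exp (L ^ 4 + 1) * δ := mul_le_mul_of_nonneg_right h1 hδ0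
      _ ≤ Real.exp (-(1 * x * L ^ 2)) := by
        rw [hδ, ← Real.exp_add]
        apply Real.exp_le_exp.2
        have h2 : L ^ 2 + (L ^ 4 + 1) ≤ L ^ 6 := by
          have e1 : L ^ 6 = L ^ 4 * L ^ 2 := by ring
          have e2 : L ^ 4 = L ^ 2 * L ^ 2 := by ring
          have e3 : L ^ 2 ≤ L ^ 4 := pow_le_pow_right₀ hL1 (by norm_num)
          have e4 : 3 ≤ L ^ 2 := by
            have a1 : L ^ 1 ≤ L ^ 2 := pow_le_pow_right₀ hL1 (by norm_num)
            have a2 : (3 : ℝ) ≤ 2 ^ 200 := by norm_num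
            rw [pow_one] at a1
            linarith
          have e5 := mul_le_mul_of_nonneg_left e4 (by positivity : 0 ≤ L ^ 4)
          linarith
        have h3 := mul_le_mul_of_nonneg_left h2 (by linarith : 0 ≤ x)
        have h4 : L ^ 4 + 1 ≤ x * (L ^ 4 + 1) :=
          le_mul_of_one_le_left (by positivity) hx1
        linarith
  linarith
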